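/- For every real t ≥ 1 there exists a constant C(t) > 0 such that every polynomial p of degree at most d on ℝ^n satisfies |p|_t ≤ C(t)^d · |p|_1. -/

import Mathlib

open MeasureTheory ProbabilityTheory

/-- The standard Gaussian measure on `ℝ^n`. -/
noncomputable def stdGaussian (n : ℕ) : Measure (Fin n → ℝ) :=
  Measure.pi fun _ => gaussianReal 0 1

/-- `N_Y^θ(X) = cos θ · X + sin θ · Y`. -/
noncomputable def noisy {n : ℕ} (θ : ℝ) (Y X : Fin n → ℝ) : Fin n → ℝ :=
  Real.cos θ • X + Real.sin θ • Y

/-- The noisy derivative `D_{Y,Z}^θ f (X)`. -/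
noncomputable def noisyDeriv {n : ℕ} (θ : ℝ) (Y Z : Fin n → ℝ)
    (f : (Fin n → ℝ) → ℝ) (X : Fin n → ℝ) : ℝ :=
  (f (noisy θ Y X) - f (noisy θ Z X)) / θ

/-- `|f_θ^{(ℓ)}(X)|₂²`, the mean square of the `ℓ`-fold noisy derivative over
independent standard Gaussian directions. -/
noncomputable def derivNormSq (n : ℕ) (θ : ℝ) : ℕ → ((Fin n → ℝ) → ℝ) → (Fin n → ℝ) → ℝ
  | 0, f, X => (f X) ^ 2
  | (ℓ+1), f, X =>
      ∫ YZ : (Fin n → ℝ) × (Fin n → ℝ),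
        derivNormSq n θ ℓ (noisyDeriv θ YZ.1 YZ.2 f) X
        ∂((stdGaussian n).prod (stdGaussian n))

/-- The averaging operator `A^θ f (X) = E_Y[f(N_Y^θ(X))]`. -/
noncomputable def avgOp (n : ℕ) (θ : ℝ) (f : (Fin n → ℝ) → ℝ) (X : Fin n → ℝ) : ℝ :=
  ∫ Y, f (noisy θ Y X) ∂(stdGaussian n)

/-- `q_{ℓ,m}(X) = |p_θ^{(ℓ),m}(X)|₂² = (A^θ)^m |p_θ^{(ℓ)}(X)|₂²`. -/
noncomputable def qlm (n : ℕ) (θ : ℝ) (p : MvPolynomial (Fin n) ℝ) (ℓ m : ℕ)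
    (X : Fin n → ℝ) : ℝ :=
  (avgOp n θ)^[m] (derivNormSq n θ ℓ (fun W => MvPolynomial.eval W p)) X

/-- The Gaussian `L^k` norm of a function on `ℝ^n`. -/
noncomputable def gaussNorm (n : ℕ) (k : ℝ) (p : (Fin n → ℝ) → ℝ) : ℝ :=
  (∫ X, |p X| ^ k ∂(stdGaussian n)) ^ (1 / k)

/-- `f` is a degree-`d` polynomial threshold function on `ℝ^n`. -/
def isPTF (n d : ℕ) (f : (Fin n → ℝ) → ℝ) : Prop :=
  ∃ p : MvPolynomial (Fin n) ℝ, p.totalDegree ≤ d ∧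
    ∀ x, f x = Real.sign (MvPolynomial.eval x p)

/-- `X` is a `k`-independent family of standard Gaussians: any `m ≤ k` distinct
coordinates are jointly distributed as `m` independent standard Gaussians. -/
def kIndepGaussian {Ω : Type} [MeasurableSpace Ω] (n k : ℕ) (P : Measure Ω)
    (X : Ω → (Fin n → ℝ)) : Prop :=
  ∀ m : ℕ, m ≤ k → ∀ ι : Fin m → Fin n, Function.Injective ι →
    Measure.map (fun ω i => X ω (ι i)) P = Measure.pi fun _ : Fin m => gaussianReal 0 1

/-!
Let `𝔼` be the Gaussian expectation and `N = ∑ i, (X i * ∂ᵢ - ∂ᵢ²)` the number operator.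
Gaussian integration by parts gives `𝔼[p * N q] = ∑ i, 𝔼[∂ᵢ p * ∂ᵢ q]`; together with
`∂ᵢ N = N ∂ᵢ + ∂ᵢ` this bounds the quadratic form `𝔼[p * N p]` by `d * 𝔼[p²]` in degree at
most `d`. The operator `N - d` kills the top-degree part of such a `p`. Since `N p` is `d p` up to
a term of lower degree, `d² 𝔼[p⁴]` is controlled by `𝔼[p² (N p - d p)²]` and
`𝔼[p³ * N p] = 3 ∑ i, 𝔼[p² (∂ᵢ p)²]`, in which `p` is paired with polynomials of degree at most
`d - 1`; Cauchy–Schwarz and induction on `d` then give `𝔼[p⁴] ≤ (7 ^ d * 𝔼[p²])²`.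
Interpolating `L²` between `L¹` and `L⁴` turns this into `|p|₂ ≤ 7 ^ d |p|₁`, and applying the
latter to the powers `p ^ 2 ^ j` doubles the exponent at the cost of a factor `7 ^ d` each time.
-/

section PolynomialCalculus

open MvPolynomial

variable {σ R : Type*}

lemma totalDegree_pderiv_le [CommSemiring R] (i : σ) (p : MvPolynomial σ R) :
    (pderiv i p).totalDegree ≤ p.totalDegree - 1 := by
  refine Finset.sup_le fun m hm => Nat.le_sub_one_of_lt ?_
  rw [mem_support_iff, coeff_pderiv] at hm
  have h : (m + Finsupp.single i 1).degree ≤ p.totalDegree :=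
    le_totalDegree (mem_support_iff.mpr (left_ne_zero_of_mul hm))
  rwa [map_add, Finsupp.degree_single] at h

lemma pderiv_comm [CommSemiring R] (i j : σ) (p : MvPolynomial σ R) :
    pderiv i (pderiv j p) = pderiv j (pderiv i p) := by
  obtain rfl | hij := eq_or_ne i j
  · rfl
  · ext m
    simp only [coeff_pderiv, add_right_comm m, Finsupp.add_apply,
      Finsupp.single_eq_of_ne hij, Finsupp.single_eq_of_ne hij.symm, add_zero]
    ring

lemma coeff_sum_X_mul_pderiv [Fintype σ] [CommSemiring R] (p : MvPolynomial σ R) (m : σ →₀ ℕ) :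
    coeff m (∑ i, X i * pderiv i p) = m.degree * coeff m p := by
  classical
  induction p using MvPolynomial.induction_on' with
  | monomial n a =>
    rw [Finset.sum_congr rfl fun i _ => X_mul_pderiv_monomial, ← Finset.sum_smul,
      ← Finsupp.degree_eq_sum, coeff_smul, nsmul_eq_mul, coeff_monomial]
    split_ifs with h
    · rw [h]
    · rw [mul_zero, mul_zero]
  | add p q hp hq => simp only [map_add, mul_add, Finset.sum_add_distrib, coeff_add, hp, hq]

/-- The number operator `∑ i, (X i * ∂ᵢ - ∂ᵢ²)`, i.e. minus the generator of the
Ornstein–Uhlenbeck semigroup. -/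
noncomputable def numberOp [Fintype σ] [CommRing R] (p : MvPolynomial σ R) : MvPolynomial σ R :=
  ∑ i, (X i * pderiv i p - pderiv i (pderiv i p))

lemma pderiv_numberOp [Fintype σ] [CommRing R] (i : σ) (p : MvPolynomial σ R) :
    pderiv i (numberOp p) = numberOp (pderiv i p) + pderiv i p := by
  classical
  have h (j : σ) : pderiv i (X j * pderiv j p - pderiv j (pderiv j p)) =
      (X j * pderiv j (pderiv i p) - pderiv j (pderiv j (pderiv i p))) +
        if j = i then pderiv i p else 0 := by
    rw [map_sub, pderiv_mul, pderiv_X, pderiv_comm i j (pderiv j p), pderiv_comm i j p,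
      Pi.single_apply]
    split_ifs with hj
    · subst hj; ring
    · ring
  simp only [numberOp, map_sum, h, Finset.sum_add_distrib, Finset.sum_ite_eq', Finset.mem_univ,
    if_true]

lemma totalDegree_numberOp_sub_smul_le [Fintype σ] [CommRing R] {d : ℕ} {p : MvPolynomial σ R}
    (hp : p.totalDegree ≤ d + 1) : (numberOp p - (d + 1 : R) • p).totalDegree ≤ d := by
  have euler : ((∑ i, X i * pderiv i p) - (d + 1 : R) • p).totalDegree ≤ d := by
    refine Finset.sup_le fun m hm => ?_
    rw [mem_support_iff, coeff_sub, coeff_sum_X_mul_pderiv, coeff_smul, smul_eq_mul,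
      ← sub_mul] at hm
    have hle : m.degree ≤ d + 1 :=
      (le_totalDegree (mem_support_iff.mpr (right_ne_zero_of_mul hm))).trans hp
    have hne : m.degree ≠ d + 1 := fun h => left_ne_zero_of_mul hm (by simp [h])
    exact Nat.le_of_lt_succ (lt_of_le_of_ne hle hne)
  have laplacian : (∑ i, pderiv i (pderiv i p)).totalDegree ≤ d :=
    totalDegree_finsetSum_le fun i _ => by
      have := totalDegree_pderiv_le i (pderiv i p)
      have := totalDegree_pderiv_le i p
      omega
  have split : numberOp p - (d + 1 : R) • p =
      (∑ i, X i * pderiv i p) - (d + 1 : R) • p - ∑ i, pderiv i (pderiv i p) := by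
    rw [numberOp, Finset.sum_sub_distrib]; abel
  rw [split]
  exact (totalDegree_sub _ _).trans (max_le euler laplacian)

end PolynomialCalculus

section GaussianExpectation

open MvPolynomial
open scoped NNReal

lemma hasDerivAt_gaussianPDFReal (μ : ℝ) (v : ℝ≥0) (x : ℝ) :
    HasDerivAt (gaussianPDFReal μ v) (-((x - μ) / v) * gaussianPDFReal μ v x) x := by
  have h : HasDerivAt (fun y : ℝ => -(y - μ) ^ 2 / (2 * v)) (-((x - μ) / v)) x := by
    refine ((((hasDerivAt_id x).sub_const μ).pow 2).neg.div_const (2 * (v : ℝ))).congr_deriv ?_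
    simp only [id, Nat.cast_ofNat, Nat.add_one_sub_one, pow_one, mul_one, neg_div]
    rw [mul_div_mul_left _ _ two_ne_zero]
  refine (h.exp.const_mul _).congr_deriv ?_
  rw [gaussianPDFReal]
  ring

lemma integrable_gaussianReal_iff {μ : ℝ} {v : ℝ≥0} (hv : v ≠ 0) {f : ℝ → ℝ} :
    Integrable f (gaussianReal μ v) ↔ Integrable fun x => gaussianPDFReal μ v x * f x := by
  rw [gaussianReal_of_var_ne_zero _ hv, integrable_withDensity_iff_integrable_smul'
    (measurable_gaussianPDF _ _) (ae_of_all _ fun _ => gaussianPDF_lt_top)]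
  simp only [toReal_gaussianPDF, smul_eq_mul]

lemma integral_sub_mul_gaussianReal {μ : ℝ} {v : ℝ≥0} (hv : v ≠ 0) {f f' : ℝ → ℝ}
    (hderiv : ∀ x, HasDerivAt f (f' x) x) (hf : Integrable f (gaussianReal μ v))
    (hxf : Integrable (fun x => (x - μ) * f x) (gaussianReal μ v))
    (hf' : Integrable f' (gaussianReal μ v)) :
    ∫ x, (x - μ) * f x ∂gaussianReal μ v = v * ∫ x, f' x ∂gaussianReal μ v := by
  have hv' : (v : ℝ) ≠ 0 := NNReal.coe_ne_zero.mpr hv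
  rw [← integral_const_mul, ← sub_eq_zero, ← integral_sub hxf (hf'.const_mul _),
    integral_gaussianReal_eq_integral_smul hv]
  refine integral_eq_zero_of_hasDerivAt_of_integrable
    (f := fun x => -v * (gaussianPDFReal μ v x * f x)) (fun x => ?_) ?_ ?_
  · refine (((hasDerivAt_gaussianPDFReal μ v x).mul (hderiv x)).const_mul _).congr_deriv ?_
    rw [smul_eq_mul]
    field_simp
    ring
  · exact (integrable_gaussianReal_iff hv).mp (hxf.sub (hf'.const_mul _))
  · exact ((integrable_gaussianReal_iff hv).mp hf).const_mul _

lemma integrable_pow_gaussianReal (μ : ℝ) (v : ℝ≥0) (k : ℕ) :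
    Integrable (fun x => x ^ k) (gaussianReal μ v) :=
  (memLp_id_gaussianReal (k : ℝ≥0)).integrable_norm_pow'.mono' (by fun_prop)
    (ae_of_all _ fun x => (norm_pow x k).le)

lemma integral_pow_succ_gaussianReal (k : ℕ) :
    ∫ x, x ^ (k + 1) ∂gaussianReal 0 1 = k * ∫ x, x ^ (k - 1) ∂gaussianReal 0 1 := by
  have h := integral_sub_mul_gaussianReal (μ := 0) one_ne_zero (fun x => hasDerivAt_pow k x)
    (integrable_pow_gaussianReal 0 1 k)
    (by simpa only [sub_zero, ← pow_succ'] using integrable_pow_gaussianReal 0 1 (k + 1))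
    ((integrable_pow_gaussianReal 0 1 (k - 1)).const_mul _)
  simpa only [sub_zero, ← pow_succ', NNReal.coe_one, one_mul, integral_const_mul] using h

variable {ι : Type*} [Fintype ι]

lemma integrable_eval_gaussian (p : MvPolynomial ι ℝ) :
    Integrable (fun x => eval x p) (Measure.pi fun _ => gaussianReal 0 1) := by
  simp only [eval_eq']
  exact integrable_finsetSum _ fun m _ => Integrable.const_mul
    (Integrable.fintype_prod fun i => integrable_pow_gaussianReal 0 1 (m i)) _

/-- The expectation of a polynomial in independent standard Gaussian variables, as a linear
functional on polynomials. -/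
noncomputable def gaussianExpect : MvPolynomial ι ℝ →ₗ[ℝ] ℝ where
  toFun p := ∫ x, eval x p ∂Measure.pi fun _ => gaussianReal 0 1
  map_add' p q := by
    simp only [map_add]
    exact integral_add (integrable_eval_gaussian p) (integrable_eval_gaussian q)
  map_smul' c p := by
    simp only [smul_eval, integral_const_mul, RingHom.id_apply, smul_eq_mul]

lemma gaussianExpect_apply (p : MvPolynomial ι ℝ) :
    gaussianExpect p = ∫ x, eval x p ∂Measure.pi fun _ => gaussianReal 0 1 := rfl

lemma gaussianExpect_C (a : ℝ) : gaussianExpect (C a : MvPolynomial ι ℝ) = a := by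
  simp only [gaussianExpect_apply, eval_C, integral_const, probReal_univ, one_smul]

lemma gaussianExpect_monomial (m : ι →₀ ℕ) (a : ℝ) :
    gaussianExpect (monomial m a) = a * ∏ i, ∫ x, x ^ m i ∂gaussianReal 0 1 := by
  simp only [gaussianExpect_apply, eval_monomial, Finsupp.prod_fintype _ _ fun _ => pow_zero _,
    integral_const_mul]
  rw [integral_fintype_prod_eq_prod fun i (x : ℝ) => x ^ m i]

lemma gaussianExpect_X_mul (i : ι) (p : MvPolynomial ι ℝ) :
    gaussianExpect (X i * p) = gaussianExpect (pderiv i p) := by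
  classical
  induction p using MvPolynomial.induction_on' with
  | add p q hp hq => simp only [mul_add, map_add, hp, hq]
  | monomial m a =>
    have h (k : ι) (hk : k ∈ Finset.univ.erase i) :
        ∫ x, x ^ (Finsupp.single i 1 + m : ι →₀ ℕ) k ∂gaussianReal 0 1 =
          ∫ x, x ^ (m - Finsupp.single i 1 : ι →₀ ℕ) k ∂gaussianReal 0 1 := by
      simp [Finsupp.single_eq_of_ne (Finset.ne_of_mem_erase hk)]
    rw [X, monomial_mul, pderiv_monomial, gaussianExpect_monomial, gaussianExpect_monomial,
      ← Finset.mul_prod_erase _ _ (Finset.mem_univ i), ← Finset.mul_prod_erase _ _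
      (Finset.mem_univ i), Finset.prod_congr rfl h, Finsupp.add_apply, Finsupp.tsub_apply,
      Finsupp.single_eq_same, add_comm 1, integral_pow_succ_gaussianReal]
    ring

lemma gaussianExpect_sq_nonneg (p : MvPolynomial ι ℝ) : 0 ≤ gaussianExpect (p ^ 2) :=
  integral_nonneg fun x => by
    rw [Pi.zero_apply, map_pow]
    exact sq_nonneg _

lemma gaussianExpect_pow_four_nonneg (p : MvPolynomial ι ℝ) : 0 ≤ gaussianExpect (p ^ 4) :=
  (pow_mul p 2 2).symm ▸ gaussianExpect_sq_nonneg (p ^ 2)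

lemma gaussianExpect_mul_sq_le (p q : MvPolynomial ι ℝ) :
    gaussianExpect (p * q) ^ 2 ≤ gaussianExpect (p ^ 2) * gaussianExpect (q ^ 2) := by
  let B : LinearMap.BilinForm ℝ (MvPolynomial ι ℝ) :=
    (LinearMap.mul ℝ (MvPolynomial ι ℝ)).compr₂ gaussianExpect
  have h := B.apply_mul_apply_le_of_forall_zero_le
    (fun r => by simpa [B, sq] using gaussianExpect_sq_nonneg r) p q
  simpa [B, sq, mul_comm q p] using h

lemma gaussianExpect_mul_numberOp (p q : MvPolynomial ι ℝ) :
    gaussianExpect (p * numberOp q) = ∑ i, gaussianExpect (pderiv i p * pderiv i q) := by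
  simp only [numberOp, Finset.mul_sum, map_sum]
  refine Finset.sum_congr rfl fun i _ => ?_
  rw [mul_sub, map_sub, mul_left_comm, gaussianExpect_X_mul, pderiv_mul, map_add,
    add_sub_cancel_right]

end GaussianExpectation

section Hypercontractivity

open MvPolynomial

variable {ι : Type*} [Fintype ι] {d : ℕ} {p q : MvPolynomial ι ℝ}

lemma gaussianExpect_mul_numberOp_self (p : MvPolynomial ι ℝ) :
    gaussianExpect (p * numberOp p) = ∑ i, gaussianExpect (pderiv i p ^ 2) := by
  simp only [gaussianExpect_mul_numberOp, sq]

lemma gaussianExpect_mul_numberOp_self_nonneg (p : MvPolynomial ι ℝ) :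
    0 ≤ gaussianExpect (p * numberOp p) := by
  rw [gaussianExpect_mul_numberOp_self]
  exact Finset.sum_nonneg fun i _ => gaussianExpect_sq_nonneg _

lemma gaussianExpect_mul_numberOp_self_le_of_sq_le {c : ℝ} (hc : 0 ≤ c)
    (h : gaussianExpect (numberOp p ^ 2) ≤ c * gaussianExpect (p * numberOp p)) :
    gaussianExpect (p * numberOp p) ≤ c * gaussianExpect (p ^ 2) := by
  have hp := gaussianExpect_sq_nonneg p
  obtain h0 | hpos := (gaussianExpect_mul_numberOp_self_nonneg p).eq_or_lt
  · rw [← h0]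
    exact mul_nonneg hc hp
  · refine le_of_mul_le_mul_right ?_ hpos
    calc gaussianExpect (p * numberOp p) * gaussianExpect (p * numberOp p)
        ≤ gaussianExpect (p ^ 2) * gaussianExpect (numberOp p ^ 2) := by
          rw [← sq]
          exact gaussianExpect_mul_sq_le p (numberOp p)
      _ ≤ gaussianExpect (p ^ 2) * (c * gaussianExpect (p * numberOp p)) := by gcongr
      _ = c * gaussianExpect (p ^ 2) * gaussianExpect (p * numberOp p) := by ring

lemma gaussianExpect_sq_numberOp_le (hp : p.totalDegree ≤ d) :
    gaussianExpect (numberOp p ^ 2) ≤ d * gaussianExpect (p * numberOp p) := by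
  induction d generalizing p with
  | zero =>
    rw [totalDegree_eq_zero_iff_eq_C.mp (Nat.le_zero.mp hp)]
    simp [numberOp]
  | succ d ih =>
    have hpderiv (i : ι) : gaussianExpect (pderiv i p * numberOp (pderiv i p)) ≤
        d * gaussianExpect (pderiv i p ^ 2) :=
      gaussianExpect_mul_numberOp_self_le_of_sq_le d.cast_nonneg
        (ih ((totalDegree_pderiv_le i p).trans (Nat.sub_le_of_le_add hp)))
    calc gaussianExpect (numberOp p ^ 2)
        = ∑ i, (gaussianExpect (pderiv i p * numberOp (pderiv i p)) +
            gaussianExpect (pderiv i p ^ 2)) := by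
          rw [sq, gaussianExpect_mul_numberOp]
          refine Finset.sum_congr rfl fun i _ => ?_
          rw [pderiv_numberOp, ← map_add]
          ring_nf
      _ ≤ ∑ i, (d * gaussianExpect (pderiv i p ^ 2) + gaussianExpect (pderiv i p ^ 2)) := by
          gcongr with i
          exact hpderiv i
      _ = (d + 1 : ℕ) * gaussianExpect (p * numberOp p) := by
          rw [gaussianExpect_mul_numberOp_self, Finset.mul_sum]
          push_cast
          simp only [add_one_mul]

lemma gaussianExpect_mul_numberOp_self_le (hp : p.totalDegree ≤ d) :
    gaussianExpect (p * numberOp p) ≤ d * gaussianExpect (p ^ 2) :=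
  gaussianExpect_mul_numberOp_self_le_of_sq_le d.cast_nonneg (gaussianExpect_sq_numberOp_le hp)

lemma gaussianExpect_sq_numberOp_sub_smul_le (hp : p.totalDegree ≤ d) :
    gaussianExpect ((numberOp p - (d : ℝ) • p) ^ 2) ≤ d ^ 2 * gaussianExpect (p ^ 2) := by
  have hexpand : (numberOp p - (d : ℝ) • p) ^ 2 =
      numberOp p ^ 2 - (2 * d : ℝ) • (p * numberOp p) + (d ^ 2 : ℝ) • p ^ 2 := by
    simp only [smul_eq_C_mul, map_mul, map_pow, map_ofNat]
    ring
  have hsq := gaussianExpect_sq_numberOp_le hp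
  have hnonneg := mul_nonneg d.cast_nonneg (gaussianExpect_mul_numberOp_self_nonneg p)
  rw [hexpand, map_add, map_sub, map_smul, map_smul, smul_eq_mul, smul_eq_mul]
  linarith

lemma gaussianExpect_pow_three_mul_numberOp (p : MvPolynomial ι ℝ) :
    gaussianExpect (p ^ 3 * numberOp p) = 3 * ∑ i, gaussianExpect (p ^ 2 * pderiv i p ^ 2) := by
  rw [gaussianExpect_mul_numberOp, Finset.mul_sum]
  refine Finset.sum_congr rfl fun i _ => ?_
  have h : pderiv i (p ^ 3) * pderiv i p = (3 : ℝ) • (p ^ 2 * pderiv i p ^ 2) := by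
    rw [pderiv_pow, smul_eq_C_mul, map_ofNat]
    push_cast
    ring
  rw [h, LinearMap.map_smul, smul_eq_mul]

lemma sq_mul_gaussianExpect_pow_four_le (c : ℝ) (p : MvPolynomial ι ℝ) :
    c ^ 2 * gaussianExpect (p ^ 4) ≤ gaussianExpect (p ^ 2 * (numberOp p - c • p) ^ 2) +
      2 * c * gaussianExpect (p ^ 3 * numberOp p) := by
  have hexpand : p ^ 2 * (numberOp p - c • p) ^ 2 =
      (p * numberOp p) ^ 2 - (2 * c) • (p ^ 3 * numberOp p) + c ^ 2 • p ^ 4 := by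
    simp only [smul_eq_C_mul, map_mul, map_pow, map_ofNat]
    ring
  have hnonneg := gaussianExpect_sq_nonneg (p * numberOp p)
  rw [hexpand, map_add, map_sub, map_smul, map_smul, smul_eq_mul, smul_eq_mul]
  linarith

lemma gaussianExpect_sq_mul_sq_le {K : ℝ} (hK : 0 ≤ K)
    (hq : gaussianExpect (q ^ 4) ≤ (K * gaussianExpect (q ^ 2)) ^ 2) :
    gaussianExpect (p ^ 2 * q ^ 2) ≤
      √(gaussianExpect (p ^ 4)) * K * gaussianExpect (q ^ 2) := by
  have hcs := gaussianExpect_mul_sq_le (p ^ 2) (q ^ 2)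
  simp only [← pow_mul, Nat.reduceMul] at hcs
  have hp4 := gaussianExpect_pow_four_nonneg p
  have hq2 := gaussianExpect_sq_nonneg q
  refine le_of_sq_le_sq ?_ (by positivity)
  calc gaussianExpect (p ^ 2 * q ^ 2) ^ 2
      ≤ gaussianExpect (p ^ 4) * (K * gaussianExpect (q ^ 2)) ^ 2 := hcs.trans (by gcongr)
    _ = (√(gaussianExpect (p ^ 4)) * K * gaussianExpect (q ^ 2)) ^ 2 := by
      rw [mul_assoc, mul_pow √_, Real.sq_sqrt hp4]

lemma gaussianExpect_pow_three_mul_numberOp_le {K : ℝ} (hK : 0 ≤ K) (hp : p.totalDegree ≤ d)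
    (hpderiv : ∀ i, gaussianExpect (pderiv i p ^ 4) ≤
      (K * gaussianExpect (pderiv i p ^ 2)) ^ 2) :
    gaussianExpect (p ^ 3 * numberOp p) ≤
      3 * (√(gaussianExpect (p ^ 4)) * K * (d * gaussianExpect (p ^ 2))) := by
  calc gaussianExpect (p ^ 3 * numberOp p)
      = 3 * ∑ i, gaussianExpect (p ^ 2 * pderiv i p ^ 2) :=
        gaussianExpect_pow_three_mul_numberOp p
    _ ≤ 3 * ∑ i, √(gaussianExpect (p ^ 4)) * K * gaussianExpect (pderiv i p ^ 2) := by
        gcongr with i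
        exact gaussianExpect_sq_mul_sq_le hK (hpderiv i)
    _ = 3 * (√(gaussianExpect (p ^ 4)) * K * gaussianExpect (p * numberOp p)) := by
        rw [gaussianExpect_mul_numberOp_self, ← Finset.mul_sum]
    _ ≤ 3 * (√(gaussianExpect (p ^ 4)) * K * (d * gaussianExpect (p ^ 2))) := by
        gcongr
        exact gaussianExpect_mul_numberOp_self_le hp

lemma gaussianExpect_pow_four_le_succ {K : ℝ} (hK : 0 ≤ K) (hp : p.totalDegree ≤ d + 1)
    (h : ∀ q : MvPolynomial ι ℝ, q.totalDegree ≤ d →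
      gaussianExpect (q ^ 4) ≤ (K * gaussianExpect (q ^ 2)) ^ 2) :
    gaussianExpect (p ^ 4) ≤ (7 * K * gaussianExpect (p ^ 2)) ^ 2 := by
  have hlower := sq_mul_gaussianExpect_pow_four_le (d + 1) p
  have hgrad := gaussianExpect_pow_three_mul_numberOp_le hK hp fun i =>
    h _ ((totalDegree_pderiv_le i p).trans (Nat.sub_le_of_le_add hp))
  have hgap := gaussianExpect_sq_numberOp_sub_smul_le hp
  have hmixed := gaussianExpect_sq_mul_sq_le (p := p) hK
    (h _ (totalDegree_numberOp_sub_smul_le hp))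
  have hw2 : √(gaussianExpect (p ^ 4)) ^ 2 = gaussianExpect (p ^ 4) :=
    Real.sq_sqrt (gaussianExpect_pow_four_nonneg p)
  have hw := Real.sqrt_nonneg (gaussianExpect (p ^ 4))
  push_cast at hgrad hgap
  generalize √(gaussianExpect (p ^ 4)) = w at *
  rw [← hw2] at hlower ⊢
  have hself : (d + 1 : ℝ) ^ 2 * w ^ 2 ≤
      (d + 1) ^ 2 * (w * (7 * K * gaussianExpect (p ^ 2))) :=
    calc (d + 1 : ℝ) ^ 2 * w ^ 2
        ≤ w * K * ((d + 1) ^ 2 * gaussianExpect (p ^ 2)) +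
            2 * (d + 1) * (3 * (w * K * ((d + 1) * gaussianExpect (p ^ 2)))) := by
          refine hlower.trans ?_
          gcongr
          exact hmixed.trans (by gcongr)
      _ = (d + 1) ^ 2 * (w * (7 * K * gaussianExpect (p ^ 2))) := by ring
  have hw_le := le_of_mul_le_mul_left hself (by positivity)
  linarith [two_mul_le_add_sq w (7 * K * gaussianExpect (p ^ 2))]

theorem gaussianExpect_pow_four_le (hp : p.totalDegree ≤ d) :
    gaussianExpect (p ^ 4) ≤ (7 ^ d * gaussianExpect (p ^ 2)) ^ 2 := by
  induction d generalizing p with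
  | zero =>
    rw [totalDegree_eq_zero_iff_eq_C.mp (Nat.le_zero.mp hp)]
    simp only [← C_pow, gaussianExpect_C]
    exact le_of_eq (by ring)
  | succ d ih =>
    rw [pow_succ' (7 : ℝ)]
    exact gaussianExpect_pow_four_le_succ (by positivity) hp fun q => ih

end Hypercontractivity

section Norms

open MvPolynomial

lemma three_mul_sq_mul_sq_le {c : ℝ} (hc : 0 ≤ c) (x : ℝ) :
    3 * c ^ 2 * x ^ 2 ≤ 2 * c ^ 3 * |x| + x ^ 4 := by
  have hfactor : 0 ≤ |x| * (|x| - c) ^ 2 * (|x| + 2 * c) := by positivity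
  rw [← sq_abs x, ← Even.pow_abs (by decide : Even 4) x]
  linarith

lemma integral_sq_le_of_integral_pow_four_le {Ω : Type*} [MeasurableSpace Ω] {μ : Measure Ω}
    {f : Ω → ℝ} {B : ℝ} (hB : 0 < B) (h1 : Integrable f μ) (h2 : Integrable (fun ω => f ω ^ 2) μ)
    (h4 : Integrable (fun ω => f ω ^ 4) μ)
    (h : ∫ ω, f ω ^ 4 ∂μ ≤ (B * ∫ ω, f ω ^ 2 ∂μ) ^ 2) :
    ∫ ω, f ω ^ 2 ∂μ ≤ (B * ∫ ω, |f ω| ∂μ) ^ 2 := by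
  obtain ⟨s, hs, hs2⟩ : ∃ s, 0 ≤ s ∧ s ^ 2 = ∫ ω, f ω ^ 2 ∂μ :=
    ⟨_, Real.sqrt_nonneg _, Real.sq_sqrt (integral_nonneg fun ω => sq_nonneg _)⟩
  rw [← hs2] at h ⊢
  obtain rfl | hspos := hs.eq_or_lt
  · rw [zero_pow two_ne_zero]
    exact sq_nonneg _
  -- The extremal `f` has `|f| ∈ {0, B * s}`, which dictates the choice `c = B * s`.
  have hint : 3 * (B * s) ^ 2 * s ^ 2 ≤
      2 * (B * s) ^ 3 * ∫ ω, |f ω| ∂μ + ∫ ω, f ω ^ 4 ∂μ := by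
    rw [hs2, ← integral_const_mul, ← integral_const_mul,
      ← integral_add (h1.abs.const_mul _) h4]
    exact integral_mono (h2.const_mul _) ((h1.abs.const_mul _).add h4) fun ω =>
      three_mul_sq_mul_sq_le (by positivity) (f ω)
  have hscaled : 2 * B ^ 2 * s ^ 3 * s ≤ 2 * B ^ 2 * s ^ 3 * (B * ∫ ω, |f ω| ∂μ) := by
    linarith
  exact pow_le_pow_left₀ hs (le_of_mul_le_mul_left hscaled (by positivity)) 2

lemma integral_eval_sq_le {ι : Type*} [Fintype ι] {d : ℕ} {p : MvPolynomial ι ℝ}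
    (hp : p.totalDegree ≤ d) :
    ∫ x, eval x p ^ 2 ∂Measure.pi (fun _ => gaussianReal 0 1) ≤
      (7 ^ d * ∫ x, |eval x p| ∂Measure.pi fun _ => gaussianReal 0 1) ^ 2 := by
  have hint (k : ℕ) :
      Integrable (fun x => eval x p ^ k) (Measure.pi fun _ => gaussianReal 0 1) := by
    simpa only [map_pow] using integrable_eval_gaussian (p ^ k)
  refine integral_sq_le_of_integral_pow_four_le (by positivity) (integrable_eval_gaussian p)
    (hint 2) (hint 4) ?_
  simpa only [gaussianExpect_apply, map_pow] using gaussianExpect_pow_four_le hp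

variable {n : ℕ}

instance isProbabilityMeasure_stdGaussian : IsProbabilityMeasure (stdGaussian n) := by
  unfold _root_.stdGaussian
  infer_instance

lemma gaussNorm_nonneg (t : ℝ) (f : (Fin n → ℝ) → ℝ) : 0 ≤ gaussNorm n t f :=
  Real.rpow_nonneg (integral_nonneg fun _ => Real.rpow_nonneg (abs_nonneg _) _) _

lemma gaussNorm_natCast_pow {k : ℕ} (hk : k ≠ 0) (f : (Fin n → ℝ) → ℝ) :
    gaussNorm n k f ^ k = ∫ x, |f x| ^ k ∂stdGaussian n := by
  simp only [gaussNorm, Real.rpow_natCast, one_div]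
  exact Real.rpow_inv_natCast_pow (integral_nonneg fun _ => by positivity) hk

lemma gaussNorm_eq_lpNorm {t : ℝ} (ht : 0 < t) {f : (Fin n → ℝ) → ℝ}
    (hf : AEStronglyMeasurable f (stdGaussian n)) :
    gaussNorm n t f = lpNorm f (ENNReal.ofReal t) (stdGaussian n) := by
  rw [lpNorm_eq_integral_norm_rpow_toReal (by simpa using ht) ENNReal.ofReal_ne_top hf,
    ENNReal.toReal_ofReal ht.le, gaussNorm, one_div]
  simp only [Real.norm_eq_abs]

lemma gaussNorm_mono_exponent {s t : ℝ} (hs : 0 < s) (hst : s ≤ t) {f : (Fin n → ℝ) → ℝ}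
    (hf : MemLp f (ENNReal.ofReal t) (stdGaussian n)) : gaussNorm n s f ≤ gaussNorm n t f := by
  rw [gaussNorm_eq_lpNorm hs hf.1, gaussNorm_eq_lpNorm (hs.trans_le hst) hf.1,
    ← toReal_eLpNorm hf.1, ← toReal_eLpNorm hf.1]
  exact ENNReal.toReal_mono hf.eLpNorm_ne_top
    (eLpNorm_le_eLpNorm_of_exponent_le (ENNReal.ofReal_le_ofReal hst) hf.1)

lemma memLp_eval_stdGaussian (p : MvPolynomial (Fin n) ℝ) {k : ℕ} (hk : k ≠ 0) :
    MemLp (fun x => eval x p) k (stdGaussian n) := by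
  refine (integrable_norm_rpow_iff (μ := stdGaussian n) (integrable_eval_gaussian p).1
    (Nat.cast_ne_zero.mpr hk) (ENNReal.natCast_ne_top k)).mp ?_
  have hpow : Integrable (fun x => eval x (p ^ k)) (stdGaussian n) :=
    integrable_eval_gaussian (p ^ k)
  simpa only [ENNReal.toReal_natCast, Real.rpow_natCast, map_pow, norm_pow] using hpow.norm

lemma gaussNorm_two_mul_le {d k : ℕ} (hk : k ≠ 0) {p : MvPolynomial (Fin n) ℝ}
    (hp : p.totalDegree ≤ d) :
    gaussNorm n (2 * k : ℕ) (fun x => eval x p) ≤ 7 ^ d * gaussNorm n k (fun x => eval x p) := by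
  have hdeg : (p ^ k).totalDegree ≤ k * d :=
    (totalDegree_pow p k).trans (Nat.mul_le_mul_left k hp)
  have h := integral_eval_sq_le hdeg
  simp only [map_pow, abs_pow] at h
  have hnorm := gaussNorm_nonneg k fun x : Fin n → ℝ => eval x p
  refine le_of_pow_le_pow_left₀ (n := 2 * k) (by omega) (by positivity) ?_
  calc gaussNorm n (2 * k : ℕ) (fun x => eval x p) ^ (2 * k)
      = ∫ x, (eval x p ^ k) ^ 2 ∂stdGaussian n := by
        rw [gaussNorm_natCast_pow (by omega)]
        simp only [mul_comm 2 k, pow_mul, ← abs_pow _ k, sq_abs]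
    _ ≤ (7 ^ (k * d) * ∫ x, |eval x p| ^ k ∂stdGaussian n) ^ 2 := h
    _ = (7 ^ d * gaussNorm n k (fun x => eval x p)) ^ (2 * k) := by
        rw [← gaussNorm_natCast_pow hk, mul_comm k d, pow_mul, ← mul_pow, ← pow_mul, mul_comm k 2]

lemma gaussNorm_two_pow_le {d : ℕ} {p : MvPolynomial (Fin n) ℝ} (hp : p.totalDegree ≤ d) (j : ℕ) :
    gaussNorm n (2 ^ j : ℕ) (fun x => eval x p) ≤
      (7 ^ j) ^ d * gaussNorm n 1 (fun x => eval x p) := by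
  induction j with
  | zero => simp
  | succ j ih =>
    calc gaussNorm n (2 ^ (j + 1) : ℕ) (fun x => eval x p)
        ≤ 7 ^ d * gaussNorm n (2 ^ j : ℕ) (fun x => eval x p) := by
          rw [pow_succ']
          exact gaussNorm_two_mul_le (by positivity) hp
      _ ≤ 7 ^ d * ((7 ^ j) ^ d * gaussNorm n 1 (fun x => eval x p)) := by gcongr
      _ = (7 ^ (j + 1)) ^ d * gaussNorm n 1 (fun x => eval x p) := by
          rw [← mul_assoc, ← mul_pow, ← pow_succ']

end Norms

theorem stmt4_general (t : ℝ) (ht : 0 < t) :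
    ∃ C > (0:ℝ),
      ∀ (n d : ℕ) (p : MvPolynomial (Fin n) ℝ), p.totalDegree ≤ d →
        gaussNorm n t (fun X => MvPolynomial.eval X p) ≤
          C ^ d * gaussNorm n 1 (fun X => MvPolynomial.eval X p) := by
  obtain ⟨j, hj⟩ := pow_unbounded_of_one_lt t one_lt_two
  refine ⟨7 ^ j, by positivity, fun n d p hp => ?_⟩
  have hmono := gaussNorm_mono_exponent (t := (2 ^ j : ℕ)) ht (by exact_mod_cast hj.le)
    (by simpa using memLp_eval_stdGaussian p (pow_ne_zero j two_ne_zero))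
  exact hmono.trans (gaussNorm_two_pow_le hp j)

/-- For every `t ≥ 1` there is `C(t) > 0` with `|p|_t ≤ C(t)^d |p|_1` for all
degree-`d` polynomials. -/
theorem stmt4 (t : ℝ) (ht : 1 ≤ t) :
    ∃ C > (0:ℝ),
      ∀ (n d : ℕ) (p : MvPolynomial (Fin n) ℝ), p.totalDegree ≤ d →
        gaussNorm n t (fun X => MvPolynomial.eval X p) ≤
          C ^ d * gaussNorm n 1 (fun X => MvPolynomial.eval X p) :=
  stmt4_general t (one_pos.trans_le ht)
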